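/- arXiv:2207.08537 — 6 statements merged into one kernel-verified Lean document; each statement's English description precedes it below -/
import Mathlib

section
/- Let (Ω, P) be a probability space, n a natural number, and for each i = 1,…,n let r_i ∈ {0,1} be a fixed relevance indicator and e_i : Ω → {0,1} a measurable examination indicator. Define click indicators c_i(ω) = e_i(ω)·r_i. For i, j set p_i = P(e_i = 1), p_{ij} = P(e_i = 1 and e_j = 1), and assume p_i > 0 for all i and p_{ij} > 0 for all i, j. Let a_i = 1/p_i, a_{ij} = 1/p_{ij}, and let A_{ij} be the 4×4 real matrix with rows (a_{ij}, 0, 0, 0), (a_i − a_{ij}, a_i, 0, 0), (a_j − a_{ij}, 0, a_j, 0), (1 − a_i − a_j + a_{ij}, 1 − a_i, 1 − a_j, 1). Then for any fixed vectors z_{ij} ∈ ℝ⁴ (i, j = 1,…,n), the expectation E[ Σ_{i,j=1}^n z_{ij}ᵀ · A_{ij} · s(c_i(ω), c_j(ω)) ] equals Σ_{i,j=1}^n z_{ij}ᵀ · s(r_i, r_j). (Unbiasedness of the pairwise loss, conditional form of Theorem 1.) -/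
open Matrix MeasureTheory

/-- For binary values `b₁, b₂ ∈ {0,1} ⊆ ℝ`, the one-hot pair-type encoding vector
`s(b₁, b₂) = (b₁b₂, b₁(1−b₂), (1−b₁)b₂, (1−b₁)(1−b₂))ᵀ ∈ ℝ⁴`. -/
def svec (b₁ b₂ : ℝ) : Fin 4 → ℝ :=
  ![b₁ * b₂, b₁ * (1 - b₂), (1 - b₁) * b₂, (1 - b₁) * (1 - b₂)]

/-!
In the coordinates `(b₁, b₂, b₁ b₂)` of a pair type the matrix `A i j` is diagonal, with entries
`a i, a j, aa i j`. Since `c i = e i * r i`, the vector `A i j *ᵥ svec (c i) (c j)` therefore has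
coordinates `a i * e i * r i`, `a j * e j * r j` and `aa i j * (e i * e j) * r i * r j`. The
encoding is affine in these coordinates, so expectations pass through it, and the inverse
propensity weights cancel the means of `e i`, `e j` and `e i * e j`.
-/

section PairType

variable {R : Type*} [CommRing R]

/-- The vector of pair-type probabilities of two `{0,1}`-valued variables with means `m₁`, `m₂` and
mixed moment `m₁₂`, in the coordinate order of `svec`. The moments may be any
ring elements: reweighted by inverse propensities, they no longer give probabilities. -/
def pairTypeOfMoments (m₁ m₂ m₁₂ : R) : Fin 4 → R :=
  ![m₁₂, m₁ - m₁₂, m₂ - m₁₂, 1 - m₁ - m₂ + m₁₂]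

/-- The correction matrix of the pairwise loss, with inverse propensity weights `a₁`, `a₂` for the
two items and `a₁₂` for the pair. -/
def pairCorrection (a₁ a₂ a₁₂ : R) : Matrix (Fin 4) (Fin 4) R :=
  !![a₁₂, 0, 0, 0;
     a₁ - a₁₂, a₁, 0, 0;
     a₂ - a₁₂, 0, a₂, 0;
     1 - a₁ - a₂ + a₁₂, 1 - a₁, 1 - a₂, 1]

theorem pairCorrection_mulVec_pairTypeOfMoments (a₁ a₂ a₁₂ m₁ m₂ m₁₂ : R) :
    pairCorrection a₁ a₂ a₁₂ *ᵥ pairTypeOfMoments m₁ m₂ m₁₂ =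
      pairTypeOfMoments (a₁ * m₁) (a₂ * m₂) (a₁₂ * m₁₂) := by
  simp only [pairCorrection, pairTypeOfMoments, cons_mulVec, empty_mulVec, cons_dotProduct_cons,
    dotProduct_of_isEmpty, vecCons_inj, and_true]
  refine ⟨?_, ?_, ?_, ?_⟩ <;> ring

end PairType

theorem svec_eq_pairTypeOfMoments (b₁ b₂ : ℝ) : svec b₁ b₂ = pairTypeOfMoments b₁ b₂ (b₁ * b₂) := by
  simp only [svec, pairTypeOfMoments, vecCons_inj, true_and, and_true]
  refine ⟨?_, ?_, ?_⟩ <;> ring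

theorem pairCorrection_mulVec_svec_mul (a₁ a₂ a₁₂ x₁ x₂ r₁ r₂ : ℝ) :
    pairCorrection a₁ a₂ a₁₂ *ᵥ svec (x₁ * r₁) (x₂ * r₂) =
      pairTypeOfMoments (a₁ * r₁ * x₁) (a₂ * r₂ * x₂) (a₁₂ * (r₁ * r₂) * (x₁ * x₂)) := by
  rw [svec_eq_pairTypeOfMoments, pairCorrection_mulVec_pairTypeOfMoments]
  congr 1 <;> ring

section DotProduct

variable {Ω ι : Type*} [MeasurableSpace Ω] {μ : Measure Ω} [Fintype ι] {f : Ω → ι → ℝ}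

theorem integrable_const_dotProduct (hf : Integrable f μ) (v : ι → ℝ) :
    Integrable (fun ω ↦ v ⬝ᵥ f ω) μ :=
  (dotProductBilin ℝ ℝ v).toContinuousLinearMap.integrable_comp hf

theorem integral_const_dotProduct (hf : Integrable f μ) (v : ι → ℝ) :
    ∫ ω, v ⬝ᵥ f ω ∂μ = v ⬝ᵥ ∫ ω, f ω ∂μ :=
  (dotProductBilin ℝ ℝ v).toContinuousLinearMap.integral_comp_comm hf

end DotProduct

section ZeroOne

theorem mul_eq_zero_or_one {M : Type*} [MulZeroOneClass M] {x y : M} (hx : x = 0 ∨ x = 1)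
    (hy : y = 0 ∨ y = 1) : x * y = 0 ∨ x * y = 1 := by
  rcases hx with h | h <;> simp [h, hy]

theorem eq_indicator_one_of_zero_or_one {Ω : Type*} {X : Ω → ℝ}
    (hX : ∀ ω, X ω = 0 ∨ X ω = 1) : X = {ω | X ω = 1}.indicator 1 := by
  ext ω
  rcases hX ω with h | h <;> simp [h]

variable {Ω : Type*} [MeasurableSpace Ω] {μ : Measure Ω} {X Y : Ω → ℝ}

theorem memLp_of_zero_or_one [IsFiniteMeasure μ] (hXm : Measurable X)
    (hX : ∀ ω, X ω = 0 ∨ X ω = 1) (q : ENNReal) : MemLp X q μ := by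
  rw [eq_indicator_one_of_zero_or_one hX]
  exact (memLp_const 1).indicator (hXm (measurableSet_singleton 1))

theorem integral_of_zero_or_one (hXm : Measurable X) (hX : ∀ ω, X ω = 0 ∨ X ω = 1) :
    ∫ ω, X ω ∂μ = μ.real {ω | X ω = 1} := by
  conv_lhs => rw [eq_indicator_one_of_zero_or_one hX]
  exact integral_indicator_one (hXm (measurableSet_singleton 1))

theorem integral_mul_of_zero_or_one (hXm : Measurable X) (hYm : Measurable Y)
    (hX : ∀ ω, X ω = 0 ∨ X ω = 1) (hY : ∀ ω, Y ω = 0 ∨ Y ω = 1) :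
    ∫ ω, X ω * Y ω ∂μ = μ.real {ω | X ω = 1 ∧ Y ω = 1} := by
  have hset : {ω | X ω * Y ω = 1} = {ω | X ω = 1 ∧ Y ω = 1} := by
    ext ω
    rcases hX ω with h | h <;> simp [h]
  rw [← hset]
  exact integral_of_zero_or_one (hXm.mul hYm) fun ω ↦ mul_eq_zero_or_one (hX ω) (hY ω)

end ZeroOne

section Integrability

variable {Ω : Type*} [MeasurableSpace Ω] {μ : Measure Ω} [IsFiniteMeasure μ] {X Y Z : Ω → ℝ}

theorem integrable_pairTypeOfMoments (hX : Integrable X μ) (hY : Integrable Y μ)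
    (hZ : Integrable Z μ) : Integrable (fun ω ↦ pairTypeOfMoments (X ω) (Y ω) (Z ω)) μ := by
  refine Integrable.of_eval fun k ↦ ?_
  fin_cases k
  · exact hZ
  · exact hX.sub hZ
  · exact hY.sub hZ
  · exact (((integrable_const 1).sub hX).sub hY).add hZ

theorem integrable_pairCorrection_mulVec_svec (hX : Integrable X μ) (hY : Integrable Y μ)
    (hXY : Integrable (fun ω ↦ X ω * Y ω) μ) (a₁ a₂ a₁₂ r₁ r₂ : ℝ) :
    Integrable (fun ω ↦ pairCorrection a₁ a₂ a₁₂ *ᵥ svec (X ω * r₁) (Y ω * r₂)) μ := by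
  simp only [pairCorrection_mulVec_svec_mul]
  exact integrable_pairTypeOfMoments (hX.const_mul _) (hY.const_mul _) (hXY.const_mul _)

end Integrability

section Expectation

variable {Ω : Type*} [MeasurableSpace Ω] {P : Measure Ω} [IsProbabilityMeasure P] {X Y Z : Ω → ℝ}

theorem integral_pairTypeOfMoments (hX : Integrable X P) (hY : Integrable Y P)
    (hZ : Integrable Z P) :
    ∫ ω, pairTypeOfMoments (X ω) (Y ω) (Z ω) ∂P =
      pairTypeOfMoments (∫ ω, X ω ∂P) (∫ ω, Y ω ∂P) (∫ ω, Z ω ∂P) := by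
  have h1 : Integrable (fun _ ↦ (1 : ℝ)) P := integrable_const 1
  have h1X : Integrable (fun ω ↦ 1 - X ω) P := h1.sub hX
  have h1XY : Integrable (fun ω ↦ 1 - X ω - Y ω) P := h1X.sub hY
  ext k
  rw [eval_integral (integrable_pairTypeOfMoments hX hY hZ).eval]
  fin_cases k
  · rfl
  · exact integral_sub hX hZ
  · exact integral_sub hY hZ
  · calc ∫ ω, 1 - X ω - Y ω + Z ω ∂P
        = ∫ _, 1 ∂P - ∫ ω, X ω ∂P - ∫ ω, Y ω ∂P + ∫ ω, Z ω ∂P := by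
          rw [integral_add h1XY hZ, integral_sub h1X hY, integral_sub h1 hX]
      _ = 1 - ∫ ω, X ω ∂P - ∫ ω, Y ω ∂P + ∫ ω, Z ω ∂P := by simp

theorem integral_pairCorrection_mulVec_svec (hX : Integrable X P) (hY : Integrable Y P)
    (hXY : Integrable (fun ω ↦ X ω * Y ω) P) {a₁ a₂ a₁₂ : ℝ} (ha₁ : a₁ * ∫ ω, X ω ∂P = 1)
    (ha₂ : a₂ * ∫ ω, Y ω ∂P = 1) (ha₁₂ : a₁₂ * ∫ ω, X ω * Y ω ∂P = 1) (r₁ r₂ : ℝ) :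
    ∫ ω, pairCorrection a₁ a₂ a₁₂ *ᵥ svec (X ω * r₁) (Y ω * r₂) ∂P = svec r₁ r₂ := by
  simp only [pairCorrection_mulVec_svec_mul]
  rw [integral_pairTypeOfMoments (hX.const_mul _) (hY.const_mul _) (hXY.const_mul _),
    svec_eq_pairTypeOfMoments]
  simp only [integral_const_mul, mul_right_comm _ _ (∫ _, _ ∂P), ha₁, ha₂, ha₁₂, one_mul]

theorem stmt_0_general {ι : Type*} [Fintype ι] (r : ι → ℝ) (e : ι → Ω → ℝ)
    (he : ∀ i, MemLp (e i) 2 P) (a : ι → ℝ) (ha : ∀ i, a i * ∫ ω, e i ω ∂P = 1)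
    (aa : ι → ι → ℝ) (haa : ∀ i j, aa i j * ∫ ω, e i ω * e j ω ∂P = 1) (z : ι → ι → Fin 4 → ℝ) :
    ∫ ω, ∑ i, ∑ j,
        z i j ⬝ᵥ pairCorrection (a i) (a j) (aa i j) *ᵥ svec (e i ω * r i) (e j ω * r j) ∂P =
      ∑ i, ∑ j, z i j ⬝ᵥ svec (r i) (r j) := by
  have hint i : Integrable (e i) P := (he i).integrable one_le_two
  have hmul i j : Integrable (fun ω ↦ e i ω * e j ω) P := (he i).integrable_mul (he j)
  have hvec i j := integrable_pairCorrection_mulVec_svec (hint i) (hint j) (hmul i j)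
    (a i) (a j) (aa i j) (r i) (r j)
  have hterm i j := integrable_const_dotProduct (hvec i j) (z i j)
  rw [integral_finsetSum _ fun i _ ↦ integrable_finsetSum _ fun j _ ↦ hterm i j]
  refine Finset.sum_congr rfl fun i _ ↦ ?_
  rw [integral_finsetSum _ fun j _ ↦ hterm i j]
  refine Finset.sum_congr rfl fun j _ ↦ ?_
  rw [integral_const_dotProduct (hvec i j),
    integral_pairCorrection_mulVec_svec (hint i) (hint j) (hmul i j) (ha i) (ha j) (haa i j)]

end Expectation

/-- Unbiasedness of the pairwise loss (conditional form of Theorem 1). -/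
theorem stmt_0 {Ω : Type*} [MeasurableSpace Ω] (P : Measure Ω) [IsProbabilityMeasure P]
    (n : ℕ) (r : Fin n → ℝ) (hr : ∀ i, r i = 0 ∨ r i = 1)
    (e : Fin n → Ω → ℝ) (he : ∀ i, Measurable (e i))
    (hebin : ∀ i ω, e i ω = 0 ∨ e i ω = 1)
    (c : Fin n → Ω → ℝ) (hc : ∀ i ω, c i ω = e i ω * r i)
    (p : Fin n → ℝ) (hp : ∀ i, p i = (P {ω | e i ω = 1}).toReal)
    (pp : Fin n → Fin n → ℝ)
    (hpp : ∀ i j, pp i j = (P {ω | e i ω = 1 ∧ e j ω = 1}).toReal)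
    (hppos : ∀ i, 0 < p i) (hpppos : ∀ i j, 0 < pp i j)
    (a : Fin n → ℝ) (ha : ∀ i, a i = 1 / p i)
    (aa : Fin n → Fin n → ℝ) (haa : ∀ i j, aa i j = 1 / pp i j)
    (A : Fin n → Fin n → Matrix (Fin 4) (Fin 4) ℝ)
    (hA : ∀ i j, A i j =
      !![aa i j, 0, 0, 0;
         a i - aa i j, a i, 0, 0;
         a j - aa i j, 0, a j, 0;
         1 - a i - a j + aa i j, 1 - a i, 1 - a j, 1])
    (z : Fin n → Fin n → Fin 4 → ℝ) :
    (∫ ω, ∑ i, ∑ j, z i j ⬝ᵥ (A i j).mulVec (svec (c i ω) (c j ω)) ∂P)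
      = ∑ i, ∑ j, z i j ⬝ᵥ svec (r i) (r j) := by
  have hmean i : a i * ∫ ω, e i ω ∂P = 1 := by
    rw [integral_of_zero_or_one (he i) (hebin i), Measure.real, ← hp, ha,
      one_div_mul_cancel (hppos i).ne']
  have hmixed i j : aa i j * ∫ ω, e i ω * e j ω ∂P = 1 := by
    rw [integral_mul_of_zero_or_one (he i) (he j) (hebin i) (hebin j), Measure.real, ← hpp, haa,
      one_div_mul_cancel (hpppos i j).ne']
  simp only [hA, hc]
  exact stmt_0_general r e (fun i ↦ memLp_of_zero_or_one (he i) (hebin i) 2) a hmean aa hmixed z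
end

section
/- Let (Ω, P) be a probability space, r₁, r₂ ∈ {0,1} fixed relevance indicators, and e₁, e₂ : Ω → {0,1} measurable examination indicators with c₁(ω) = e₁(ω)·r₁ and c₂(ω) = e₂(ω)·r₂. Then the entrywise expectation E[s(c₁(ω), c₂(ω))] equals M · s(r₁, r₂), where M is the 4×4 matrix with rows (p₁₂, 0, 0, 0), (p₁ − p₁₂, p₁, 0, 0), (p₂ − p₁₂, 0, p₂, 0), (1 − p₁ − p₂ + p₁₂, 1 − p₁, 1 − p₂, 1), with p₁ = P(e₁ = 1), p₂ = P(e₂ = 1), p₁₂ = P(e₁ = 1 and e₂ = 1). Consequently, the (t₁, t₂) entry of M is the probability that a pair of items whose true relevance pair is of type t₂ appears in the click feedback as a pair of type t₁. -/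
open Matrix MeasureTheory

/-!
For fixed relevances, `svec (e₁ * r₁) (e₂ * r₂)` is the image of `svec r₁ r₂` under a matrix whose
entries are affine in `e₁`, `e₂` and `e₁ * e₂`. Expectations under a probability measure commute
with affine maps, so taking the mean replaces these three variables by their expectations, which
for binary variables are the probabilities `p₁`, `p₂` and `p₁₂`.
-/

section Binary

variable {Ω : Type*} [MeasurableSpace Ω] {μ : Measure Ω} {f g : Ω → ℝ}

lemma integrable_of_ae_eq_zero_or_one [IsFiniteMeasure μ] (hf : AEMeasurable f μ)
    (hf01 : ∀ᵐ ω ∂μ, f ω = 0 ∨ f ω = 1) : Integrable f μ := by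
  refine Integrable.of_mem_Icc 0 1 hf ?_
  filter_upwards [hf01] with ω h
  rcases h with h | h <;> simp [h]

lemma integral_eq_measureReal_of_ae_eq_zero_or_one (hf : AEMeasurable f μ)
    (hf01 : ∀ᵐ ω ∂μ, f ω = 0 ∨ f ω = 1) : ∫ ω, f ω ∂μ = μ.real {ω | f ω = 1} := by
  have hset : NullMeasurableSet {ω | f ω = 1} μ :=
    hf.nullMeasurableSet_preimage (measurableSet_singleton 1)
  have hind : f =ᵐ[μ] {ω | f ω = 1}.indicator 1 := by
    filter_upwards [hf01] with ω h
    rcases h with h | h <;> simp [h]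
  rw [integral_congr_ae hind, integral_indicator₀ hset]
  simp

lemma ae_mul_eq_zero_or_one (hf01 : ∀ᵐ ω ∂μ, f ω = 0 ∨ f ω = 1)
    (hg01 : ∀ᵐ ω ∂μ, g ω = 0 ∨ g ω = 1) : ∀ᵐ ω ∂μ, f ω * g ω = 0 ∨ f ω * g ω = 1 := by
  filter_upwards [hf01, hg01] with ω hf hg
  rcases hf with hf | hf <;> simp [hf, hg]

lemma integral_mul_eq_measureReal_of_ae_eq_zero_or_one (hf : AEMeasurable f μ)
    (hg : AEMeasurable g μ) (hf01 : ∀ᵐ ω ∂μ, f ω = 0 ∨ f ω = 1)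
    (hg01 : ∀ᵐ ω ∂μ, g ω = 0 ∨ g ω = 1) :
    ∫ ω, f ω * g ω ∂μ = μ.real {ω | f ω = 1 ∧ g ω = 1} := by
  refine (integral_eq_measureReal_of_ae_eq_zero_or_one (hf.mul hg)
    (ae_mul_eq_zero_or_one hf01 hg01)).trans (measureReal_congr (Filter.eventuallyEq_set.mpr ?_))
  filter_upwards [hf01] with ω h
  rcases h with h | h <;> simp [h]

end Binary

lemma integral_mulVec_apply {Ω m n 𝕜 : Type*} [MeasurableSpace Ω] {μ : Measure Ω} [Fintype n]
    [RCLike 𝕜] {A : Ω → Matrix m n 𝕜} {i : m} (hA : ∀ j, Integrable (fun ω => A ω i j) μ)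
    (v : n → 𝕜) :
    ∫ ω, (A ω *ᵥ v) i ∂μ = ((of fun i j => ∫ ω, A ω i j ∂μ) *ᵥ v) i := by
  simp only [mulVec, dotProduct, of_apply]
  rw [integral_finsetSum _ fun j _ => (hA j).mul_const (v j)]
  simp only [integral_mul_const]

/-- The transition matrix from relevance pair types (columns) to click pair types (rows), in terms
of the examination probabilities `p₁`, `p₂` of the two items and their joint probability `p₁₂`.
The parameters are arbitrary reals, so that the matrix can also be formed from the examination
indicators themselves. -/
def pairTypeTransition (p₁ p₂ p₁₂ : ℝ) : Matrix (Fin 4) (Fin 4) ℝ :=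
  !![p₁₂, 0, 0, 0;
     p₁ - p₁₂, p₁, 0, 0;
     p₂ - p₁₂, 0, p₂, 0;
     1 - p₁ - p₂ + p₁₂, 1 - p₁, 1 - p₂, 1]

lemma svec_mul_mul (e₁ e₂ r₁ r₂ : ℝ) :
    svec (e₁ * r₁) (e₂ * r₂) = pairTypeTransition e₁ e₂ (e₁ * e₂) *ᵥ svec r₁ r₂ := by
  ext t
  fin_cases t <;>
    simp [svec, pairTypeTransition, mulVec, dotProduct, Fin.sum_univ_four] <;> ring

section Expectation

variable {Ω : Type*} [MeasurableSpace Ω] {P : Measure Ω} {X Y Z : Ω → ℝ}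

lemma integrable_pairTypeTransition_apply [IsFiniteMeasure P] (hX : Integrable X P)
    (hY : Integrable Y P) (hZ : Integrable Z P) (i j : Fin 4) :
    Integrable (fun ω => pairTypeTransition (X ω) (Y ω) (Z ω) i j) P := by
  have h1XY : Integrable (fun ω => 1 - X ω - Y ω) P := by fun_prop
  fin_cases i <;> fin_cases j <;>
    simp [pairTypeTransition, Integrable.sub', hX, hY, hZ, h1XY]

lemma integral_pairTypeTransition_apply [IsProbabilityMeasure P] (hX : Integrable X P)
    (hY : Integrable Y P) (hZ : Integrable Z P) (i j : Fin 4) :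
    ∫ ω, pairTypeTransition (X ω) (Y ω) (Z ω) i j ∂P =
      pairTypeTransition (∫ ω, X ω ∂P) (∫ ω, Y ω ∂P) (∫ ω, Z ω ∂P) i j := by
  have h1X : Integrable (fun ω => 1 - X ω) P := by fun_prop
  have h1XY : Integrable (fun ω => 1 - X ω - Y ω) P := by fun_prop
  fin_cases i <;> fin_cases j <;>
    simp [pairTypeTransition, integral_add, integral_sub, hX, hY, hZ, h1X, h1XY]

lemma integral_svec_mul_mul [IsProbabilityMeasure P] (hX : Integrable X P) (hY : Integrable Y P)
    (hXY : Integrable (fun ω => X ω * Y ω) P) (r₁ r₂ : ℝ) (t : Fin 4) :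
    ∫ ω, svec (X ω * r₁) (Y ω * r₂) t ∂P =
      (pairTypeTransition (∫ ω, X ω ∂P) (∫ ω, Y ω ∂P) (∫ ω, X ω * Y ω ∂P) *ᵥ svec r₁ r₂) t := by
  simp only [svec_mul_mul]
  rw [integral_mulVec_apply (integrable_pairTypeTransition_apply hX hY hXY t)]
  simp only [integral_pairTypeTransition_apply hX hY hXY]
  rfl

end Expectation

theorem stmt_4_general {Ω : Type*} [MeasurableSpace Ω] (P : Measure Ω) [IsProbabilityMeasure P]
    (r₁ r₂ : ℝ) {e₁ e₂ : Ω → ℝ} (he₁ : AEMeasurable e₁ P) (he₂ : AEMeasurable e₂ P)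
    (he₁bin : ∀ᵐ ω ∂P, e₁ ω = 0 ∨ e₁ ω = 1) (he₂bin : ∀ᵐ ω ∂P, e₂ ω = 0 ∨ e₂ ω = 1)
    (t : Fin 4) :
    ∫ ω, svec (e₁ ω * r₁) (e₂ ω * r₂) t ∂P =
      (pairTypeTransition (P.real {ω | e₁ ω = 1}) (P.real {ω | e₂ ω = 1})
        (P.real {ω | e₁ ω = 1 ∧ e₂ ω = 1}) *ᵥ svec r₁ r₂) t := by
  rw [← integral_eq_measureReal_of_ae_eq_zero_or_one he₁ he₁bin,
    ← integral_eq_measureReal_of_ae_eq_zero_or_one he₂ he₂bin,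
    ← integral_mul_eq_measureReal_of_ae_eq_zero_or_one he₁ he₂ he₁bin he₂bin]
  exact integral_svec_mul_mul (integrable_of_ae_eq_zero_or_one he₁ he₁bin)
    (integrable_of_ae_eq_zero_or_one he₂ he₂bin)
    (integrable_of_ae_eq_zero_or_one (he₁.mul he₂) (ae_mul_eq_zero_or_one he₁bin he₂bin)) r₁ r₂ t

theorem stmt_4 {Ω : Type*} [MeasurableSpace Ω] (P : Measure Ω) [IsProbabilityMeasure P]
    (r₁ r₂ : ℝ) (hr₁ : r₁ = 0 ∨ r₁ = 1) (hr₂ : r₂ = 0 ∨ r₂ = 1)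
    (e₁ e₂ : Ω → ℝ) (he₁ : Measurable e₁) (he₂ : Measurable e₂)
    (he₁bin : ∀ ω, e₁ ω = 0 ∨ e₁ ω = 1) (he₂bin : ∀ ω, e₂ ω = 0 ∨ e₂ ω = 1)
    (c₁ c₂ : Ω → ℝ) (hc₁ : ∀ ω, c₁ ω = e₁ ω * r₁) (hc₂ : ∀ ω, c₂ ω = e₂ ω * r₂)
    (p₁ p₂ p₁₂ : ℝ)
    (hp₁ : p₁ = (P {ω | e₁ ω = 1}).toReal)
    (hp₂ : p₂ = (P {ω | e₂ ω = 1}).toReal)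
    (hp₁₂ : p₁₂ = (P {ω | e₁ ω = 1 ∧ e₂ ω = 1}).toReal)
    (M : Matrix (Fin 4) (Fin 4) ℝ)
    (hM : M = !![p₁₂, 0, 0, 0;
                 p₁ - p₁₂, p₁, 0, 0;
                 p₂ - p₁₂, 0, p₂, 0;
                 1 - p₁ - p₂ + p₁₂, 1 - p₁, 1 - p₂, 1]) :
    ∀ t : Fin 4, (∫ ω, svec (c₁ ω) (c₂ ω) t ∂P) = M.mulVec (svec r₁ r₂) t := by
  subst hp₁ hp₂ hp₁₂ hM
  simp only [hc₁, hc₂]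
  exact stmt_4_general P r₁ r₂ he₁.aemeasurable he₂.aemeasurable
    (.of_forall he₁bin) (.of_forall he₂bin)
end

section
/- Let (Ω, P) be a probability space, r₁, r₂ ∈ {0,1} fixed relevance indicators, and e₁, e₂ : Ω → {0,1} measurable examination indicators with c₁(ω) = e₁(ω)·r₁ and c₂(ω) = e₂(ω)·r₂. Set p₁ = P(e₁ = 1), p₂ = P(e₂ = 1), p₁₂ = P(e₁ = 1 and e₂ = 1) and assume p₁ > 0, p₂ > 0, p₁₂ > 0. Let a₁ = 1/p₁, a₂ = 1/p₂, a₁₂ = 1/p₁₂ and let A be the 4×4 matrix with rows (a₁₂, 0, 0, 0), (a₁ − a₁₂, a₁, 0, 0), (a₂ − a₁₂, 0, a₂, 0), (1 − a₁ − a₂ + a₁₂, 1 − a₁, 1 − a₂, 1). Then the entrywise expectation E[A · s(c₁(ω), c₂(ω))] equals s(r₁, r₂). -/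
open Matrix MeasureTheory

/-! A 2 × 2 table of total mass `1` is an affine function of its two margins and its joint entry,
and the table `s(b₁, b₂)` has margins `b₁`, `b₂` and joint entry `b₁b₂`. In these coordinates `A` is
diagonal: it multiplies the margins by `a₁`, `a₂` and the joint entry by `a₁₂`. Expectation commutes
with the affine map, and replacing each `rᵢ` by `cᵢ = eᵢrᵢ` multiplies the expected coordinates of
`s(r₁, r₂)` by `p₁`, `p₂`, `p₁₂`, so the weights cancel. -/

/-- The cells `(z, x - z, y - z, 1 - x - y + z)` of the 2 × 2 table of total mass `1` with
margins `x`, `y` and joint entry `z`, in the order of `svec`. Keeping `z` independent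
of `x` and `y` makes the cells affine functions, so that expectations pass through. -/
def cellVec (x y z : ℝ) : Fin 4 → ℝ :=
  ![z, x - z, y - z, 1 - x - y + z]

/-- The pairwise inverse-propensity matrix with marginal weights `a₁`, `a₂` and joint
weight `a₁₂`, which reweights the margins and the joint entry of a one-hot encoded pair. -/
def pairWeightMatrix (a₁ a₂ a₁₂ : ℝ) : Matrix (Fin 4) (Fin 4) ℝ :=
  !![a₁₂, 0, 0, 0;
     a₁ - a₁₂, a₁, 0, 0;
     a₂ - a₁₂, 0, a₂, 0;
     1 - a₁ - a₂ + a₁₂, 1 - a₁, 1 - a₂, 1]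

theorem cellVec_mul_eq_svec (b₁ b₂ : ℝ) : cellVec b₁ b₂ (b₁ * b₂) = svec b₁ b₂ := by
  unfold cellVec svec
  congrm ![?_, ?_, ?_, ?_] <;> ring

theorem pairWeightMatrix_mulVec_svec (a₁ a₂ a₁₂ b₁ b₂ : ℝ) :
    pairWeightMatrix a₁ a₂ a₁₂ *ᵥ svec b₁ b₂ =
      cellVec (a₁ * b₁) (a₂ * b₂) (a₁₂ * (b₁ * b₂)) := by
  simp only [pairWeightMatrix, svec, cellVec, cons_mulVec, cons_dotProduct_cons,
    dotProduct_of_isEmpty, empty_mulVec]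
  congrm ![?_, ?_, ?_, ?_] <;> ring

section Integral

variable {Ω : Type*} [MeasurableSpace Ω] {P : Measure Ω}

theorem integral_cellVec [IsProbabilityMeasure P] {X Y Z : Ω → ℝ} (hX : Integrable X P)
    (hY : Integrable Y P) (hZ : Integrable Z P) (t : Fin 4) :
    ∫ ω, cellVec (X ω) (Y ω) (Z ω) t ∂P =
      cellVec (∫ ω, X ω ∂P) (∫ ω, Y ω ∂P) (∫ ω, Z ω ∂P) t := by
  have h1X : Integrable (fun ω => 1 - X ω) P := (integrable_const 1).sub hX
  have h1XY : Integrable (fun ω => 1 - X ω - Y ω) P := h1X.sub hY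
  fin_cases t
  · rfl
  · exact integral_sub hX hZ
  · exact integral_sub hY hZ
  · calc ∫ ω, 1 - X ω - Y ω + Z ω ∂P
        = (∫ ω, 1 - X ω ∂P) - (∫ ω, Y ω ∂P) + ∫ ω, Z ω ∂P := by
          rw [integral_add h1XY hZ, integral_sub h1X hY]
      _ = 1 - (∫ ω, X ω ∂P) - (∫ ω, Y ω ∂P) + ∫ ω, Z ω ∂P := by
          rw [integral_sub (integrable_const 1) hX, integral_const, probReal_univ, one_smul]

theorem integral_eq_measureReal_of_ae_eq_zero_or_one_s5 {e : Ω → ℝ} (he : AEMeasurable e P)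
    (hbin : ∀ᵐ ω ∂P, e ω = 0 ∨ e ω = 1) : ∫ ω, e ω ∂P = P.real {ω | e ω = 1} := by
  have hmeas : NullMeasurableSet {ω | e ω = 1} P :=
    he.nullMeasurableSet_preimage (measurableSet_singleton 1)
  have hind : e =ᵐ[P] {ω | e ω = 1}.indicator fun _ => 1 := by
    filter_upwards [hbin] with ω hω
    rcases hω with h | h <;> simp [h]
  rw [integral_congr_ae hind, integral_indicator₀ hmeas, setIntegral_const, smul_eq_mul, mul_one]

theorem integral_mul_eq_measureReal_of_ae_eq_zero_or_one_s5 {e₁ e₂ : Ω → ℝ}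
    (he₁ : AEMeasurable e₁ P) (he₂ : AEMeasurable e₂ P)
    (hbin₁ : ∀ᵐ ω ∂P, e₁ ω = 0 ∨ e₁ ω = 1) (hbin₂ : ∀ᵐ ω ∂P, e₂ ω = 0 ∨ e₂ ω = 1) :
    ∫ ω, e₁ ω * e₂ ω ∂P = P.real {ω | e₁ ω = 1 ∧ e₂ ω = 1} := by
  have hset : {ω | e₁ ω * e₂ ω = 1} =ᵐ[P] {ω | e₁ ω = 1 ∧ e₂ ω = 1} := by
    filter_upwards [hbin₁] with ω hω
    apply propext
    change e₁ ω * e₂ ω = 1 ↔ e₁ ω = 1 ∧ e₂ ω = 1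
    rcases hω with h | h <;> simp [h]
  have hbin : ∀ᵐ ω ∂P, e₁ ω * e₂ ω = 0 ∨ e₁ ω * e₂ ω = 1 := by
    filter_upwards [hbin₁, hbin₂] with ω h₁ h₂
    rcases h₁ with h₁ | h₁ <;> simp [h₁, h₂]
  exact (integral_eq_measureReal_of_ae_eq_zero_or_one_s5 (he₁.mul he₂) hbin).trans
    (measureReal_congr hset)

end Integral

theorem stmt_5_general {Ω : Type*} [MeasurableSpace Ω] (P : Measure Ω) [IsProbabilityMeasure P]
    (r₁ r₂ : ℝ) {e₁ e₂ : Ω → ℝ} {p₁ p₂ p₁₂ : ℝ}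
    (hp₁ : ∫ ω, e₁ ω ∂P = p₁) (hp₂ : ∫ ω, e₂ ω ∂P = p₂) (hp₁₂ : ∫ ω, e₁ ω * e₂ ω ∂P = p₁₂)
    (hp₁_ne : p₁ ≠ 0) (hp₂_ne : p₂ ≠ 0) (hp₁₂_ne : p₁₂ ≠ 0) (t : Fin 4) :
    ∫ ω, (pairWeightMatrix (1 / p₁) (1 / p₂) (1 / p₁₂) *ᵥ svec (e₁ ω * r₁) (e₂ ω * r₂)) t ∂P =
      svec r₁ r₂ t := by
  have integrable_reweighted {e : Ω → ℝ} {p : ℝ} (r : ℝ) (hp : ∫ ω, e ω ∂P = p) (hp_ne : p ≠ 0) :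
      Integrable (fun ω => 1 / p * (e ω * r)) P :=
    ((Integrable.of_integral_ne_zero (hp ▸ hp_ne)).mul_const r).const_mul _
  have integral_reweighted {e : Ω → ℝ} {p : ℝ} (r : ℝ) (hp : ∫ ω, e ω ∂P = p) (hp_ne : p ≠ 0) :
      ∫ ω, 1 / p * (e ω * r) ∂P = r := by
    rw [integral_const_mul, integral_mul_const, hp, ← mul_assoc, one_div_mul_cancel hp_ne, one_mul]
  simp only [pairWeightMatrix_mulVec_svec, mul_mul_mul_comm _ r₁ _ r₂]
  rw [integral_cellVec (integrable_reweighted r₁ hp₁ hp₁_ne) (integrable_reweighted r₂ hp₂ hp₂_ne)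
      (integrable_reweighted (r₁ * r₂) hp₁₂ hp₁₂_ne),
    integral_reweighted r₁ hp₁ hp₁_ne, integral_reweighted r₂ hp₂ hp₂_ne,
    integral_reweighted (r₁ * r₂) hp₁₂ hp₁₂_ne, cellVec_mul_eq_svec]

theorem stmt_5 {Ω : Type*} [MeasurableSpace Ω] (P : Measure Ω) [IsProbabilityMeasure P]
    (r₁ r₂ : ℝ) (hr₁ : r₁ = 0 ∨ r₁ = 1) (hr₂ : r₂ = 0 ∨ r₂ = 1)
    (e₁ e₂ : Ω → ℝ) (he₁ : Measurable e₁) (he₂ : Measurable e₂)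
    (he₁bin : ∀ ω, e₁ ω = 0 ∨ e₁ ω = 1) (he₂bin : ∀ ω, e₂ ω = 0 ∨ e₂ ω = 1)
    (c₁ c₂ : Ω → ℝ) (hc₁ : ∀ ω, c₁ ω = e₁ ω * r₁) (hc₂ : ∀ ω, c₂ ω = e₂ ω * r₂)
    (p₁ p₂ p₁₂ : ℝ)
    (hp₁ : p₁ = (P {ω | e₁ ω = 1}).toReal)
    (hp₂ : p₂ = (P {ω | e₂ ω = 1}).toReal)
    (hp₁₂ : p₁₂ = (P {ω | e₁ ω = 1 ∧ e₂ ω = 1}).toReal)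
    (hp₁pos : 0 < p₁) (hp₂pos : 0 < p₂) (hp₁₂pos : 0 < p₁₂)
    (a₁ a₂ a₁₂ : ℝ) (ha₁ : a₁ = 1 / p₁) (ha₂ : a₂ = 1 / p₂) (ha₁₂ : a₁₂ = 1 / p₁₂)
    (A : Matrix (Fin 4) (Fin 4) ℝ)
    (hA : A = !![a₁₂, 0, 0, 0;
                 a₁ - a₁₂, a₁, 0, 0;
                 a₂ - a₁₂, 0, a₂, 0;
                 1 - a₁ - a₂ + a₁₂, 1 - a₁, 1 - a₂, 1]) :
    ∀ t : Fin 4, (∫ ω, A.mulVec (svec (c₁ ω) (c₂ ω)) t ∂P) = svec r₁ r₂ t := by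
  obtain rfl := funext hc₁
  obtain rfl := funext hc₂
  subst ha₁ ha₂ ha₁₂ hA
  have hbin₁ : ∀ᵐ ω ∂P, e₁ ω = 0 ∨ e₁ ω = 1 := .of_forall he₁bin
  have hbin₂ : ∀ᵐ ω ∂P, e₂ ω = 0 ∨ e₂ ω = 1 := .of_forall he₂bin
  have hmean₁ : ∫ ω, e₁ ω ∂P = p₁ :=
    (integral_eq_measureReal_of_ae_eq_zero_or_one_s5 he₁.aemeasurable hbin₁).trans hp₁.symm
  have hmean₂ : ∫ ω, e₂ ω ∂P = p₂ :=
    (integral_eq_measureReal_of_ae_eq_zero_or_one_s5 he₂.aemeasurable hbin₂).trans hp₂.symm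
  have hmean₁₂ : ∫ ω, e₁ ω * e₂ ω ∂P = p₁₂ :=
    (integral_mul_eq_measureReal_of_ae_eq_zero_or_one_s5 he₁.aemeasurable he₂.aemeasurable
      hbin₁ hbin₂).trans hp₁₂.symm
  exact stmt_5_general P r₁ r₂ hmean₁ hmean₂ hmean₁₂ hp₁pos.ne' hp₂pos.ne' hp₁₂pos.ne'
end

section
/- Consider the row-skipping browsing model: a probability space (Ω, P); rows m = 1, …, R with positive sizes N(m) and S(m) = N(1) + ⋯ + N(m−1) the number of items before row m (S(1) = 0); measurable events G_m (row m is skipped) with P(G_m) = γ for each m, and D_v (the user continues past rank v) with P(D_v) = C_v for each rank v; and the family of all events {G_m} ∪ {D_v} mutually independent. For a rank u lying in row m₀ (i.e. S(m₀) < u ≤ S(m₀) + N(m₀)), define the examination event E_u = (⋂_{m=1}^{m₀−1} (G_m ∪ ⋂_{v=S(m)+1}^{S(m)+N(m)} D_v)) ∩ G_{m₀}ᶜ ∩ ⋂_{v=S(m₀)+1}^{u−1} D_v. Then P(E_u) = (∏_{m=1}^{m₀−1} ((1−γ)·∏_{v=S(m)+1}^{S(m)+N(m)} C_v + γ)) ·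 (1−γ) · ∏_{v=S(m₀)+1}^{u−1} C_v. -/
open MeasureTheory

/-!
All events that decide how a row is browsed lie in the σ-algebra generated by its skip event and by
the continuation events of its ranks. Distinct rows use disjoint sets of these events, so by
independence the examination probability is a product over rows. Inside one row, with
`X = ⋂ D_v`, the event `G ∪ X` is the disjoint union of `G` and `Gᶜ ∩ X`, so both kinds of factor
come from the single computation `P(Gᶜ ∩ X) = (1 - P(G)) ∏ P(D_v)`.
-/

open ProbabilityTheory MeasurableSpace

section Blocks

variable {Ω ι κ : Type*} {mΩ : MeasurableSpace Ω} {P : Measure Ω} {m : ι → MeasurableSpace Ω}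
  {T : κ → Set ι}

theorem iIndep_iSup_of_pairwise_disjoint (h_le : ∀ i, m i ≤ mΩ) (h_indep : iIndep m P)
    (hT : Pairwise (Function.onFun Disjoint T)) : iIndep (fun k ↦ ⨆ i ∈ T k, m i) P := by
  have := h_indep.isProbabilityMeasure
  refine (iIndep_iff _ _).2 fun s A hA ↦ ?_
  induction s using Finset.cons_induction with
  | empty => simp
  | cons k s hk ih =>
    rw [Finset.forall_mem_cons] at hA
    have hdisj : Disjoint (T k) (⋃ j ∈ s, T j) :=
      Set.disjoint_iUnion₂_right.2 fun j hj ↦ hT (ne_of_mem_of_not_mem hj hk).symm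
    have hinter : MeasurableSet[⨆ i ∈ ⋃ j ∈ s, T j, m i] (⋂ j ∈ s, A j) :=
      Finset.measurableSet_biInter (m := ⨆ i ∈ ⋃ j ∈ s, T j, m i) s fun j hj ↦
        biSup_mono (f := m) (fun _ hi ↦ Set.mem_biUnion hj hi) _ (hA.2 j hj)
    have hsplit : ⋂ j ∈ Finset.cons k s hk, A j = A k ∩ ⋂ j ∈ s, A j := by simp
    rw [hsplit, (Indep_iff _ _ _).1 (indep_iSup_of_disjoint h_le h_indep hdisj) _ _ hA.1 hinter,
      ih hA.2, Finset.prod_cons]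

end Blocks

section Rows

variable {Ω ι κ : Type*} {B : ι → Finset κ} {G : ι → Set Ω} {D : κ → Set Ω}

/-- The indices of the events governing row `m` with ranks `B m`: the skip event of the row is
indexed in the left summand, the continuation events of its ranks in the right one. -/
def rowIndices (B : ι → Finset κ) (m : ι) : Set (ι ⊕ κ) :=
  {i | Sum.elim (· = m) (· ∈ B m) i}

/-- The σ-algebra of the events decided by the user's behaviour on row `m`, where `G` are the skip
events, `D` the continuation events and `B m` the ranks of row `m`. -/
abbrev rowSigmaAlgebra (B : ι → Finset κ) (G : ι → Set Ω) (D : κ → Set Ω) (m : ι) :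
    MeasurableSpace Ω :=
  ⨆ i ∈ rowIndices B m, generateFrom {Sum.elim G D i}

theorem pairwise_disjoint_rowIndices (hB : Pairwise (Function.onFun Disjoint B)) :
    Pairwise (Function.onFun Disjoint (rowIndices B)) := by
  refine fun m n hmn ↦ Set.disjoint_left.2 ?_
  rintro (k | v) hm hn
  · exact hmn (Eq.trans (Eq.symm hm) hn)
  · exact Finset.disjoint_left.1 (hB hmn) hm hn

theorem generateFrom_le_rowSigmaAlgebra {m : ι} {i : ι ⊕ κ} (hi : i ∈ rowIndices B m) :
    generateFrom {Sum.elim G D i} ≤ rowSigmaAlgebra B G D m :=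
  le_iSup₂_of_le i hi le_rfl

theorem measurableSet_rowSigmaAlgebra_skip (m : ι) :
    MeasurableSet[rowSigmaAlgebra B G D m] (G m) :=
  generateFrom_le_rowSigmaAlgebra (i := .inl m) rfl _ (measurableSet_generateFrom rfl)

theorem measurableSet_rowSigmaAlgebra_biInter {m : ι} {F : Finset κ} (hF : F ⊆ B m) :
    MeasurableSet[rowSigmaAlgebra B G D m] (⋂ v ∈ F, D v) :=
  Finset.measurableSet_biInter (m := rowSigmaAlgebra B G D m) F fun v hv ↦
    generateFrom_le_rowSigmaAlgebra (i := .inr v) (hF hv) _ (measurableSet_generateFrom rfl)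

variable [MeasurableSpace Ω] {P : Measure Ω}

theorem rowSigmaAlgebra_le (hG : ∀ m, MeasurableSet (G m)) (hD : ∀ v, MeasurableSet (D v)) (m : ι) :
    rowSigmaAlgebra B G D m ≤ ‹MeasurableSpace Ω› :=
  iSup₂_le fun i _ ↦ generateFrom_singleton_le (Sum.rec hG hD i)

theorem iIndep_rowSigmaAlgebra (hG : ∀ m, MeasurableSet (G m)) (hD : ∀ v, MeasurableSet (D v))
    (hB : Pairwise (Function.onFun Disjoint B)) (hindep : iIndepSet (Sum.elim G D) P) :
    iIndep (rowSigmaAlgebra B G D) P :=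
  iIndep_iSup_of_pairwise_disjoint (fun i ↦ generateFrom_singleton_le (Sum.rec hG hD i))
    ((iIndepSet_iff_iIndep _ _).1 hindep) (pairwise_disjoint_rowIndices hB)

theorem measureReal_compl_inter_biInter (hindep : iIndepSet (Sum.elim G D) P) {m : ι}
    (hG : MeasurableSet (G m)) (F : Finset κ) :
    P.real ((G m)ᶜ ∩ ⋂ v ∈ F, D v) = (1 - P.real (G m)) * ∏ v ∈ F, P.real (D v) := by
  have := hindep.isProbabilityMeasure
  let A : ι ⊕ κ → Set Ω := Sum.elim (fun k ↦ (G k)ᶜ) D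
  have hA : ∀ i, MeasurableSet[generateFrom {Sum.elim G D i}] (A i) := by
    rintro (k | v)
    · exact (measurableSet_generateFrom (Set.mem_singleton (G k))).compl
    · exact measurableSet_generateFrom rfl
  have hprod := (iIndepSet_iff _ _).1 hindep (({m} : Finset ι).disjSum F) fun i _ ↦ hA i
  have hinter : ⋂ i ∈ ({m} : Finset ι).disjSum F, A i = (G m)ᶜ ∩ ⋂ v ∈ F, D v := by
    ext ω
    simp [A]
  rw [hinter, Finset.prod_disjSum, Finset.prod_singleton] at hprod
  rw [measureReal_def, hprod, ENNReal.toReal_mul, ENNReal.toReal_prod]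
  exact congrArg (· * _) (probReal_compl_eq_one_sub hG)

theorem measureReal_union_biInter (hindep : iIndepSet (Sum.elim G D) P) {m : ι}
    (hG : MeasurableSet (G m)) (F : Finset κ) :
    P.real (G m ∪ ⋂ v ∈ F, D v) =
      (1 - P.real (G m)) * ∏ v ∈ F, P.real (D v) + P.real (G m) := by
  have := hindep.isProbabilityMeasure
  rw [← Set.union_sdiff_self, measureReal_union' Set.disjoint_sdiff_right hG, Set.sdiff_eq,
    Set.inter_comm, measureReal_compl_inter_biInter hindep hG, add_comm]

/-- Here `s` are the rows before row `m₀` and `F` the ranks of row `m₀` before the examined one. -/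
theorem stmt_12_general (hG : ∀ m, MeasurableSet (G m)) (hD : ∀ v, MeasurableSet (D v))
    (hB : Pairwise (Function.onFun Disjoint B)) (hindep : iIndepSet (Sum.elim G D) P)
    {s : Finset ι} {m₀ : ι} (hm₀ : m₀ ∉ s) {F : Finset κ} (hF : F ⊆ B m₀) :
    P.real ((⋂ m ∈ s, (G m ∪ ⋂ v ∈ B m, D v)) ∩ (G m₀)ᶜ ∩ ⋂ v ∈ F, D v) =
      (∏ m ∈ s, ((1 - P.real (G m)) * ∏ v ∈ B m, P.real (D v) + P.real (G m))) *
        (1 - P.real (G m₀)) * ∏ v ∈ F, P.real (D v) := by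
  have hrows := iIndep_rowSigmaAlgebra hG hD hB hindep
  have hpass (m : ι) : MeasurableSet[rowSigmaAlgebra B G D m] (G m ∪ ⋂ v ∈ B m, D v) :=
    (measurableSet_rowSigmaAlgebra_skip m).union (measurableSet_rowSigmaAlgebra_biInter subset_rfl)
  have hreach : MeasurableSet[rowSigmaAlgebra B G D m₀] ((G m₀)ᶜ ∩ ⋂ v ∈ F, D v) :=
    (measurableSet_rowSigmaAlgebra_skip m₀).compl.inter (measurableSet_rowSigmaAlgebra_biInter hF)
  have hpass_all : MeasurableSet[⨆ m ∈ s, rowSigmaAlgebra B G D m]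
      (⋂ m ∈ s, (G m ∪ ⋂ v ∈ B m, D v)) :=
    Finset.measurableSet_biInter (m := ⨆ m ∈ s, rowSigmaAlgebra B G D m) s fun m hm ↦
      le_iSup₂ (f := fun m (_ : m ∈ s) ↦ rowSigmaAlgebra B G D m) m hm _ (hpass m)
  have hsplit : Indep (⨆ m ∈ s, rowSigmaAlgebra B G D m) (rowSigmaAlgebra B G D m₀) P := by
    simpa using indep_iSup_of_disjoint (rowSigmaAlgebra_le hG hD) hrows
      (Set.disjoint_singleton_right.2 (mt Finset.mem_coe.1 hm₀))
  rw [Set.inter_assoc, measureReal_def, (Indep_iff _ _ _).1 hsplit _ _ hpass_all hreach,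
    hrows.meas_biInter fun m _ ↦ hpass m, ENNReal.toReal_mul, ENNReal.toReal_prod]
  simp only [← measureReal_def, measureReal_union_biInter hindep (hG _),
    measureReal_compl_inter_biInter hindep (hG _), mul_assoc]

end Rows

theorem pairwise_disjoint_Icc_of_succ_eq_add {S N : ℕ → ℕ} (hS : ∀ m, S (m + 1) = S m + N m) :
    Pairwise (Function.onFun Disjoint fun m ↦ Finset.Icc (S m + 1) (S m + N m)) := by
  have hmono : Monotone S := monotone_nat_of_le_succ fun m ↦ (hS m).symm ▸ Nat.le_add_right _ _
  refine (pairwise_disjoint_on _).2 fun m n hmn ↦ Finset.disjoint_left.2 fun v hvm hvn ↦ ?_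
  have hend : S m + N m ≤ S n := hS m ▸ hmono (Nat.succ_le_of_lt hmn)
  rw [Finset.mem_Icc] at hvm hvn
  omega

/-- In the row-skipping browsing model, the probability of examining a given rank `u`
lying in row `m₀` factors as in equation (14) of the paper. -/
theorem stmt_12 {Ω : Type*} [MeasurableSpace Ω] (P : Measure Ω) [IsProbabilityMeasure P]
    (R : ℕ) (N : ℕ → ℕ) (hN : ∀ m, 1 ≤ m → m ≤ R → 0 < N m)
    (S : ℕ → ℕ) (hS1 : S 1 = 0) (hS : ∀ m, S (m + 1) = S m + N m)
    (γ : ℝ) (C : ℕ → ℝ)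
    (G : ℕ → Set Ω) (D : ℕ → Set Ω)
    (hGmeas : ∀ m, MeasurableSet (G m)) (hDmeas : ∀ v, MeasurableSet (D v))
    (hG : ∀ m, (P (G m)).toReal = γ) (hD : ∀ v, (P (D v)).toReal = C v)
    (hindep : ProbabilityTheory.iIndepSet (Sum.elim G D : ℕ ⊕ ℕ → Set Ω) P)
    (u m₀ : ℕ) (hm₀ : 1 ≤ m₀) (hm₀R : m₀ ≤ R)
    (hu1 : S m₀ < u) (hu2 : u ≤ S m₀ + N m₀)
    (E : Set Ω)
    (hE : E = (⋂ m ∈ Finset.Icc 1 (m₀ - 1),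
          (G m ∪ ⋂ v ∈ Finset.Icc (S m + 1) (S m + N m), D v))
        ∩ (G m₀)ᶜ
        ∩ ⋂ v ∈ Finset.Icc (S m₀ + 1) (u - 1), D v) :
    (P E).toReal
      = (∏ m ∈ Finset.Icc 1 (m₀ - 1),
          ((1 - γ) * (∏ v ∈ Finset.Icc (S m + 1) (S m + N m), C v) + γ))
        * (1 - γ) * ∏ v ∈ Finset.Icc (S m₀ + 1) (u - 1), C v := by
  subst hE
  have hF : Finset.Icc (S m₀ + 1) (u - 1) ⊆ Finset.Icc (S m₀ + 1) (S m₀ + N m₀) :=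
    Finset.Icc_subset_Icc_right ((Nat.sub_le u 1).trans hu2)
  simpa only [measureReal_def, hG, hD] using stmt_12_general hGmeas hDmeas
    (pairwise_disjoint_Icc_of_succ_eq_add hS) hindep (by rw [Finset.mem_Icc]; omega) hF
end

section
/- In the row-skipping browsing model (probability space (Ω, P); rows m = 1, …, R with positive sizes N(m), S(m) the number of items before row m; mutually independent events G_m with P(G_m) = γ and D_v with P(D_v) = C_v; examination events E_u defined as E_u = (⋂_{m < row(u)} (G_m ∪ ⋂_{v=S(m)+1}^{S(m)+N(m)} D_v)) ∩ G_{row(u)}ᶜ ∩ ⋂_{v=S(row(u))+1}^{u−1} D_v), let u₁ < u₂ be two ranks lying in the same row. Then P(E_{u₁} ∩ E_{u₂}) = P(E_{u₁}) · ∏_{v=u₁}^{u₂−1} C_v. -/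
open MeasureTheory

/-!
Reading on from rank `u₁` to rank `u₂` in the same row only adds the continuation events
`D v`, `u₁ ≤ v < u₂`, to the event that `u₁` is examined. The latter is determined by the skips
and by the continuations at ranks below `u₁`, so it is independent of the added events.
-/

theorem measure_inter_biInter_of_iIndepSet {Ω ι : Type*} [MeasurableSpace Ω] {P : Measure Ω}
    {F : ι → Set Ω} (hF : ∀ i, MeasurableSet (F i)) (hindep : ProbabilityTheory.iIndepSet F P)
    {T : Set ι} {J : Finset ι} (hTJ : Disjoint T J) {A : Set Ω}
    (hA : MeasurableSet[MeasurableSpace.generateFrom (F '' T)] A) :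
    P (A ∩ ⋂ j ∈ J, F j) = P A * ∏ j ∈ J, P (F j) := by
  have hJ : MeasurableSet[MeasurableSpace.generateFrom (F '' J)] (⋂ j ∈ J, F j) :=
    Finset.measurableSet_biInter _ fun j hj =>
      MeasurableSpace.measurableSet_generateFrom (Set.mem_image_of_mem F hj)
  rw [← hindep.meas_biInter J]
  exact (ProbabilityTheory.Indep_iff _ _ P).1
    (hindep.indep_generateFrom_of_disjoint hF T J hTJ) A _ hA hJ

section RowSkipping

variable {Ω : Type*} {S N : ℕ → ℕ} {G D : ℕ → Set Ω} {m u u₁ u₂ : ℕ}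

/-- The event that the item at rank `u` of row `m` is examined: every earlier row is skipped or
fully browsed, row `m` is not skipped, and the user continues past all ranks of row `m` before `u`.
Rows and ranks are numbered from `1`; row `k` consists of the `N k` ranks following `S k`, `G k` is
the event that it is skipped, and `D v` the event that the user continues after rank `v`. -/
def examination (S N : ℕ → ℕ) (G D : ℕ → Set Ω) (m u : ℕ) : Set Ω :=
  (⋂ k ∈ Finset.Icc 1 (m - 1), (G k ∪ ⋂ v ∈ Finset.Icc (S k + 1) (S k + N k), D v))
    ∩ (G m)ᶜ
    ∩ ⋂ v ∈ Finset.Icc (S m + 1) (u - 1), D v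

theorem examination_eq_inter_biInter (hu₁ : S m < u₁) (hu : u₁ ≤ u₂) :
    examination S N G D m u₂ =
      examination S N G D m u₁ ∩ ⋂ v ∈ Finset.Icc u₁ (u₂ - 1), D v := by
  have hsplit : Finset.Icc (S m + 1) (u₂ - 1) =
      Finset.Icc (S m + 1) (u₁ - 1) ∪ Finset.Icc u₁ (u₂ - 1) := by
    ext v
    simp only [Finset.mem_union, Finset.mem_Icc]
    omega
  rw [examination, hsplit, Finset.set_biInter_inter, ← Set.inter_assoc, examination]

theorem row_end_le_row_start (hS : ∀ k, S (k + 1) = S k + N k) {k : ℕ} (hk : k < m) :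
    S k + N k ≤ S m := by
  have hmono : Monotone S := monotone_nat_of_le_succ fun k => hS k ▸ Nat.le_add_right _ _
  exact hS k ▸ hmono hk

theorem measurableSet_examination [MeasurableSpace Ω] (hS : ∀ k, S (k + 1) = S k + N k)
    (hu : S m < u) (hG : ∀ k ≤ m, MeasurableSet (G k)) (hD : ∀ v < u, MeasurableSet (D v)) :
    MeasurableSet (examination S N G D m u) := by
  refine .inter (.inter ?earlierRows (hG m le_rfl).compl) ?currentRow
  case earlierRows =>
    refine Finset.measurableSet_biInter _ fun k hk => ?_
    have hkm : k < m := by grind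
    refine (hG k hkm.le).union (Finset.measurableSet_biInter _ fun v hv => hD v ?_)
    exact ((Finset.mem_Icc.1 hv).2.trans (row_end_le_row_start hS hkm)).trans_lt hu
  case currentRow =>
    exact Finset.measurableSet_biInter _ fun v hv => hD v (by grind)

theorem stmt_13_general [MeasurableSpace Ω] {P : Measure Ω}
    (hS : ∀ k, S (k + 1) = S k + N k)
    (hGmeas : ∀ k, MeasurableSet (G k)) (hDmeas : ∀ v, MeasurableSet (D v))
    (hindep : ProbabilityTheory.iIndepSet (Sum.elim G D) P)
    (hu₁ : S m < u₁) (hu : u₁ ≤ u₂) :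
    P (examination S N G D m u₁ ∩ examination S N G D m u₂) =
      P (examination S N G D m u₁) * ∏ v ∈ Finset.Icc u₁ (u₂ - 1), P (D v) := by
  let past : Set (ℕ ⊕ ℕ) := Set.range Sum.inl ∪ Sum.inr '' Set.Iio u₁
  let added : Finset (ℕ ⊕ ℕ) := (Finset.Icc u₁ (u₂ - 1)).map .inr
  have hdisj : Disjoint past added := by
    rw [Set.disjoint_left]
    rintro _ (⟨k, rfl⟩ | ⟨v, hv, rfl⟩) hadded
    · simp [added] at hadded
    · have huv : u₁ ≤ v := by simp_all [added]
      exact hv.not_ge huv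
  have hpast : MeasurableSet[MeasurableSpace.generateFrom (Sum.elim G D '' past)]
      (examination S N G D m u₁) := by
    refine @measurableSet_examination Ω S N G D m u₁ (.generateFrom _) hS hu₁
      (fun k _ => ?_) (fun v hv => ?_)
    · exact MeasurableSpace.measurableSet_generateFrom ⟨.inl k, .inl ⟨k, rfl⟩, rfl⟩
    · exact MeasurableSpace.measurableSet_generateFrom ⟨.inr v, .inr ⟨v, hv, rfl⟩, rfl⟩
  have hfactor := measure_inter_biInter_of_iIndepSet (Sum.rec hGmeas hDmeas) hindep hdisj hpast
  rw [examination_eq_inter_biInter hu₁ hu, ← Set.inter_assoc, Set.inter_self]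
  simpa [added] using hfactor

end RowSkipping

/-- In the row-skipping browsing model, the joint examination probability of two ranks
`u₁ < u₂` lying in the same row `m₀` equals `P(E u₁) · ∏_{v=u₁}^{u₂-1} C v`. -/
theorem stmt_13 {Ω : Type*} [MeasurableSpace Ω] (P : Measure Ω) [IsProbabilityMeasure P]
    (R : ℕ) (N : ℕ → ℕ) (hN : ∀ m, 1 ≤ m → m ≤ R → 0 < N m)
    (S : ℕ → ℕ) (hS1 : S 1 = 0) (hS : ∀ m, S (m + 1) = S m + N m)
    (γ : ℝ) (C : ℕ → ℝ)
    (G : ℕ → Set Ω) (D : ℕ → Set Ω)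
    (hGmeas : ∀ m, MeasurableSet (G m)) (hDmeas : ∀ v, MeasurableSet (D v))
    (hG : ∀ m, (P (G m)).toReal = γ) (hD : ∀ v, (P (D v)).toReal = C v)
    (hindep : ProbabilityTheory.iIndepSet (Sum.elim G D : ℕ ⊕ ℕ → Set Ω) P)
    (m₀ : ℕ) (hm₀ : 1 ≤ m₀) (hm₀R : m₀ ≤ R)
    (u₁ u₂ : ℕ) (hu₁ : S m₀ < u₁) (hu₁u₂ : u₁ < u₂) (hu₂ : u₂ ≤ S m₀ + N m₀)
    (E : ℕ → Set Ω)
    (hE : ∀ u, E u = (⋂ m ∈ Finset.Icc 1 (m₀ - 1),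
          (G m ∪ ⋂ v ∈ Finset.Icc (S m + 1) (S m + N m), D v))
        ∩ (G m₀)ᶜ
        ∩ ⋂ v ∈ Finset.Icc (S m₀ + 1) (u - 1), D v) :
    (P (E u₁ ∩ E u₂)).toReal
      = (P (E u₁)).toReal * ∏ v ∈ Finset.Icc u₁ (u₂ - 1), C v := by
  obtain rfl : E = examination S N G D m₀ := funext hE
  simp only [stmt_13_general hS hGmeas hDmeas hindep hu₁ hu₁u₂.le, ENNReal.toReal_mul,
    ENNReal.toReal_prod, hD]
end

section
/- In the row-skipping browsing model (probability space (Ω, P); rows m = 1, …, R with positive sizes N(m), S(m) the number of items before row m; mutually independent events G_m with P(G_m) = γ and D_v with P(D_v) = C_v; examination events E_u defined as E_u = (⋂_{m < row(u)} (G_m ∪ ⋂_{v=S(m)+1}^{S(m)+N(m)} D_v)) ∩ G_{row(u)}ᶜ ∩ ⋂_{v=S(row(u))+1}^{u−1} D_v), let u₁ < u₂ be ranks with row(u₁) < row(u₂). Then P(E_{u₁} ∩ E_{u₂}) = P(E_{u₁}) · (∏_{v=u₁}^{S(row(u₁))+N(row(u₁))} C_v) · (∏_{m=row(u₁)+1}^{row(u₂)−1}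 ((1−γ)·∏_{v=S(m)+1}^{S(m)+N(m)} C_v + γ)) · (1−γ) · ∏_{v=S(row(u₂))+1}^{u₂−1} C_v. -/
open MeasureTheory

/-!
A row is either skipped (`G m`) or browsed up to some of its items, so an examination event is an
intersection of one event per row, and distinct rows are independent. If the user examines a rank
of row `m₁` and then one of a later row, then row `m₁` was not skipped, hence was browsed to its
end. The joint event is therefore the intersection of the event that row `m₁` is reached and wholly
browsed with the event that the second rank is reached when starting afresh after row `m₁`, and
these two events involve different rows.
-/

open ProbabilityTheory Function

section Independence

variable {Ω ι κ : Type*} [MeasurableSpace Ω] {P : Measure Ω}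

lemma iIndep_biSup_of_pairwise_disjoint {m : ι → MeasurableSpace Ω}
    (hle : ∀ i, m i ≤ ‹MeasurableSpace Ω›) (hm : iIndep m P) {T : κ → Set ι}
    (hT : Pairwise (Disjoint on T)) : iIndep (fun k ↦ ⨆ i ∈ T k, m i) P := by
  classical
  have := hm.isProbabilityMeasure
  rw [iIndep_iff]
  intro F A hA
  induction F using Finset.induction_on with
  | empty => simp
  | insert k F hk ih =>
    rw [Finset.forall_mem_insert] at hA
    have hdisj : Disjoint (T k) (⋃ l ∈ F, T l) :=
      Set.disjoint_iUnion₂_right.2 fun l hl ↦ hT (ne_of_mem_of_not_mem hl hk).symm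
    have hinter : MeasurableSet[⨆ i ∈ ⋃ l ∈ F, T l, m i] (⋂ l ∈ F, A l) :=
      @Finset.measurableSet_biInter _ _ (⨆ i ∈ ⋃ l ∈ F, T l, m i) A F fun l hl ↦
        (biSup_mono (Set.subset_biUnion_of_mem (u := T) hl) :
          ⨆ i ∈ T l, m i ≤ ⨆ i ∈ ⋃ l ∈ F, T l, m i) _ (hA.2 l hl)
    rw [Finset.set_biInter_insert, Finset.prod_insert hk, ← ih hA.2]
    exact (Indep_iff _ _ _).1 (indep_iSup_of_disjoint hle hm hdisj) _ _ hA.1 hinter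

lemma measureReal_inter_of_indep {m₁ m₂ : MeasurableSpace Ω} (h : Indep m₁ m₂ P) {A B : Set Ω}
    (hA : MeasurableSet[m₁] A) (hB : MeasurableSet[m₂] B) :
    P.real (A ∩ B) = P.real A * P.real B := by
  simp only [Measure.real, (Indep_iff _ _ _).1 h A B hA hB, ENNReal.toReal_mul]

lemma measureReal_inter_biInter_of_iIndep {m : ι → MeasurableSpace Ω} (h : iIndep m P) {i : ι}
    {F : Finset ι} (hi : i ∉ F) {A' : Set Ω} (hA' : MeasurableSet[m i] A') {A : ι → Set Ω}
    (hA : ∀ j ∈ F, MeasurableSet[m j] (A j)) :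
    P.real (A' ∩ ⋂ j ∈ F, A j) = P.real A' * ∏ j ∈ F, P.real (A j) := by
  classical
  have hmeas : ∀ j ∈ insert i F, MeasurableSet[m j] (update A i A' j) := by
    refine (Finset.forall_mem_insert _ _ _).2 ⟨by rwa [update_self], fun j hj ↦ ?_⟩
    rw [update_of_ne (ne_of_mem_of_not_mem hj hi)]
    exact hA j hj
  have hprod := h.meas_biInter hmeas
  rw [Finset.set_biInter_insert_update _ hi, Finset.prod_insert hi, update_self] at hprod
  rw [Measure.real, hprod, ENNReal.toReal_mul, ENNReal.toReal_prod]
  congr 1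
  exact Finset.prod_congr rfl fun j hj ↦ by
    rw [update_of_ne (ne_of_mem_of_not_mem hj hi), Measure.real]

end Independence

section RowSkipping

variable {Ω ι κ : Type*} (G : κ → Set Ω) (D : ι → Set Ω) (B : κ → Finset ι)

/-- The event that row `m` is not skipped and the user continues past every item of `F`. The set
`F` stands for the items of the row that precede the one under consideration. -/
def browsed (m : κ) (F : Finset ι) : Set Ω := (G m)ᶜ ∩ ⋂ v ∈ F, D v

/-- The event that row `m`, whose set of items is `B m`, does not stop the user: it is skipped or
the user continues past each of its items. -/
def passed (m : κ) : Set Ω := G m ∪ ⋂ v ∈ B m, D v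

/-- The event that the user passes all rows of `s` and then browses the items `F` of row `m`.
When `s` consists of the rows before `m` and `F` of the items of row `m` before a given one, this
is the event that the given item is examined. -/
def examined (s : Finset κ) (m : κ) (F : Finset ι) : Set Ω :=
  (⋂ k ∈ s, passed G D B k) ∩ browsed G D m F

/-- The σ-algebra generated by the events concerning row `m`: skipping it, and
continuing past each of its items. The index set is a `Finset` of `κ ⊕ ι`, matching the index type
of the independent family `Sum.elim G D`. -/
abbrev rowAlgebra (m : κ) : MeasurableSpace Ω :=
  ⨆ i ∈ (({m} : Finset κ).disjSum (B m) : Set (κ ⊕ ι)),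
    MeasurableSpace.generateFrom {Sum.elim G D i}

variable {G D B}

lemma browsed_inter_passed {m : κ} {F : Finset ι} (hF : F ⊆ B m) :
    browsed G D m F ∩ passed G D B m = browsed G D m (B m) := by
  ext ω
  simp only [browsed, passed, Set.mem_inter_iff, Set.mem_compl_iff, Set.mem_union, Set.mem_iInter]
  have hall : (∀ v ∈ B m, ω ∈ D v) → ∀ v ∈ F, ω ∈ D v := fun h v hv ↦ h v (hF hv)
  tauto

lemma passed_eq_union_browsed (m : κ) : passed G D B m = G m ∪ browsed G D m (B m) := by
  rw [passed, browsed, Set.union_inter_distrib_left, Set.union_compl_self, Set.univ_inter]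

lemma examined_inter_examined [DecidableEq κ] {s t : Finset κ} {m₁ m₂ : κ} {F₁ F₂ : Finset ι}
    (hF₁ : F₁ ⊆ B m₁) :
    examined G D B s m₁ F₁ ∩ examined G D B (insert m₁ (s ∪ t)) m₂ F₂
      = examined G D B s m₁ (B m₁) ∩ examined G D B t m₂ F₂ := by
  ext ω
  simp only [examined, ← browsed_inter_passed hF₁, Set.mem_inter_iff, Set.mem_iInter,
    Finset.forall_mem_insert, Finset.mem_union, or_imp, forall_and]
  tauto

lemma generateFrom_le_rowAlgebra {m : κ} {i : κ ⊕ ι} (hi : i ∈ ({m} : Finset κ).disjSum (B m)) :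
    MeasurableSpace.generateFrom {Sum.elim G D i} ≤ rowAlgebra G D B m :=
  le_biSup (fun i ↦ MeasurableSpace.generateFrom {Sum.elim G D i}) hi

lemma measurableSet_rowAlgebra_skip (m : κ) : MeasurableSet[rowAlgebra G D B m] (G m) :=
  generateFrom_le_rowAlgebra (i := Sum.inl m) (by simp) _
    (MeasurableSpace.measurableSet_generateFrom rfl)

lemma measurableSet_rowAlgebra_biInter {m : κ} {F : Finset ι} (hF : F ⊆ B m) :
    MeasurableSet[rowAlgebra G D B m] (⋂ v ∈ F, D v) :=
  @Finset.measurableSet_biInter _ _ (rowAlgebra G D B m) D F fun v hv ↦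
    generateFrom_le_rowAlgebra (i := Sum.inr v) (by simpa using hF hv) _
      (MeasurableSpace.measurableSet_generateFrom rfl)

lemma measurableSet_rowAlgebra_browsed {m : κ} {F : Finset ι} (hF : F ⊆ B m) :
    MeasurableSet[rowAlgebra G D B m] (browsed G D m F) :=
  @MeasurableSet.inter _ (rowAlgebra G D B m) _ _ (measurableSet_rowAlgebra_skip m).compl
    (measurableSet_rowAlgebra_biInter hF)

lemma measurableSet_rowAlgebra_passed (m : κ) :
    MeasurableSet[rowAlgebra G D B m] (passed G D B m) :=
  @MeasurableSet.union _ (rowAlgebra G D B m) _ _ (measurableSet_rowAlgebra_skip m)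
    (measurableSet_rowAlgebra_biInter subset_rfl)

lemma measurableSet_biSup_rowAlgebra_examined [DecidableEq κ] {s : Finset κ} {m : κ}
    {F : Finset ι} (hF : F ⊆ B m) :
    MeasurableSet[⨆ k ∈ (insert m s : Finset κ), rowAlgebra G D B k] (examined G D B s m F) := by
  have hle {k : κ} (hk : k ∈ insert m s) :
      rowAlgebra G D B k ≤ ⨆ l ∈ insert m s, rowAlgebra G D B l :=
    le_biSup (rowAlgebra G D B) hk
  refine @MeasurableSet.inter _ (⨆ k ∈ insert m s, rowAlgebra G D B k) _ _ ?_ ?_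
  · exact @Finset.measurableSet_biInter _ _ (⨆ k ∈ insert m s, rowAlgebra G D B k) _ s fun k hk ↦
      hle (Finset.mem_insert_of_mem hk) _ (measurableSet_rowAlgebra_passed k)
  · exact hle (Finset.mem_insert_self m s) _ (measurableSet_rowAlgebra_browsed hF)

variable [MeasurableSpace Ω] {P : Measure Ω}

lemma rowAlgebra_le (hG : ∀ m, MeasurableSet (G m)) (hD : ∀ v, MeasurableSet (D v)) (m : κ) :
    rowAlgebra G D B m ≤ ‹MeasurableSpace Ω› :=
  iSup₂_le fun i _ ↦ MeasurableSpace.generateFrom_singleton_le (i.rec hG hD)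

lemma iIndep_rowAlgebra (hG : ∀ m, MeasurableSet (G m)) (hD : ∀ v, MeasurableSet (D v))
    (hindep : iIndepSet (Sum.elim G D) P) (hB : Pairwise (Disjoint on B)) :
    iIndep (rowAlgebra G D B) P := by
  refine iIndep_biSup_of_pairwise_disjoint
    (fun i ↦ MeasurableSpace.generateFrom_singleton_le (i.rec hG hD))
    ((iIndepSet_iff_iIndep _ P).1 hindep) fun k l hkl ↦ ?_
  rw [Function.onFun, Finset.disjoint_coe, Finset.disjoint_left]
  rintro (m | v) hk hl
  · simp only [Finset.inl_mem_disjSum, Finset.mem_singleton] at hk hl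
    exact hkl (hk.symm.trans hl)
  · rw [Finset.inr_mem_disjSum] at hk hl
    exact Finset.disjoint_left.1 (hB hkl) hk hl

lemma measureReal_browsed {m : κ} (hG : MeasurableSet (G m))
    (hindep : iIndepSet (Sum.elim G D) P) (F : Finset ι) :
    P.real (browsed G D m F) = (1 - P.real (G m)) * ∏ v ∈ F, P.real (D v) := by
  have := hindep.isProbabilityMeasure
  have hgen (i : κ ⊕ ι) :
      MeasurableSet[MeasurableSpace.generateFrom {Sum.elim G D i}] (Sum.elim G D i) :=
    MeasurableSpace.measurableSet_generateFrom rfl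
  have h := measureReal_inter_biInter_of_iIndep ((iIndepSet_iff_iIndep _ P).1 hindep)
    (i := Sum.inl m) (F := F.map .inr) (by simp) (hgen _).compl fun j _ ↦ hgen j
  simpa [browsed, probReal_compl_eq_one_sub hG] using h

lemma measureReal_passed {m : κ} (hG : MeasurableSet (G m))
    (hindep : iIndepSet (Sum.elim G D) P) :
    P.real (passed G D B m)
      = (1 - P.real (G m)) * ∏ v ∈ B m, P.real (D v) + P.real (G m) := by
  have := hindep.isProbabilityMeasure
  have hdisj : Disjoint (G m) (browsed G D m (B m)) :=
    disjoint_compl_right.mono_right Set.inter_subset_left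
  rw [passed_eq_union_browsed, measureReal_union' hdisj hG, measureReal_browsed hG hindep,
    add_comm]

lemma measureReal_examined (hG : ∀ m, MeasurableSet (G m)) (hD : ∀ v, MeasurableSet (D v))
    (hindep : iIndepSet (Sum.elim G D) P) (hB : Pairwise (Disjoint on B)) {s : Finset κ} {m : κ}
    (hm : m ∉ s) {F : Finset ι} (hF : F ⊆ B m) :
    P.real (examined G D B s m F)
      = (∏ k ∈ s, ((1 - P.real (G k)) * ∏ v ∈ B k, P.real (D v) + P.real (G k)))
        * ((1 - P.real (G m)) * ∏ v ∈ F, P.real (D v)) := by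
  rw [examined, Set.inter_comm, mul_comm, measureReal_inter_biInter_of_iIndep
    (iIndep_rowAlgebra hG hD hindep hB) hm (measurableSet_rowAlgebra_browsed hF)
    fun k _ ↦ measurableSet_rowAlgebra_passed k]
  simp only [measureReal_browsed (hG _) hindep, measureReal_passed (hG _) hindep]

theorem measureReal_examined_inter_examined [DecidableEq κ] [DecidableEq ι]
    (hG : ∀ m, MeasurableSet (G m)) (hD : ∀ v, MeasurableSet (D v))
    (hindep : iIndepSet (Sum.elim G D) P) (hB : Pairwise (Disjoint on B)) {s t : Finset κ}
    {m₁ m₂ : κ} (hm₁ : m₁ ∉ s) (hm₂ : m₂ ∉ t) (hst : Disjoint (insert m₁ s) (insert m₂ t))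
    {F₁ F₂ : Finset ι} (hF₁ : F₁ ⊆ B m₁) (hF₂ : F₂ ⊆ B m₂) :
    P.real (examined G D B s m₁ F₁ ∩ examined G D B (insert m₁ (s ∪ t)) m₂ F₂)
      = P.real (examined G D B s m₁ F₁) * (∏ v ∈ B m₁ \ F₁, P.real (D v))
        * (∏ m ∈ t, ((1 - P.real (G m)) * (∏ v ∈ B m, P.real (D v)) + P.real (G m)))
        * (1 - P.real (G m₂)) * ∏ v ∈ F₂, P.real (D v) := by
  have hfresh : Indep (⨆ k ∈ insert m₁ s, rowAlgebra G D B k)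
      (⨆ k ∈ insert m₂ t, rowAlgebra G D B k) P :=
    indep_iSup_of_disjoint (rowAlgebra_le hG hD) (iIndep_rowAlgebra hG hD hindep hB)
      (Finset.disjoint_coe.2 hst)
  rw [examined_inter_examined hF₁, measureReal_inter_of_indep hfresh
      (measurableSet_biSup_rowAlgebra_examined subset_rfl)
      (measurableSet_biSup_rowAlgebra_examined hF₂),
    measureReal_examined hG hD hindep hB hm₁ subset_rfl,
    measureReal_examined hG hD hindep hB hm₁ hF₁, measureReal_examined hG hD hindep hB hm₂ hF₂,
    ← Finset.prod_sdiff hF₁]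
  ring

end RowSkipping

section Grid

/-- The ranks of the items in row `m` of a grid, where row `m` has `N m` items and `S m` items come
before it. Ranks are numbered from `1`. -/
def rowRanks (S N : ℕ → ℕ) (m : ℕ) : Finset ℕ := Finset.Icc (S m + 1) (S m + N m)

/-- The event that the item at rank `u`, lying in row `m` of a grid, is examined. Rows are numbered
from `1`. -/
def rankExamined {Ω : Type*} (G D : ℕ → Set Ω) (S N : ℕ → ℕ) (u m : ℕ) : Set Ω :=
  examined G D (rowRanks S N) (Finset.Icc 1 (m - 1)) m (Finset.Icc (S m + 1) (u - 1))

variable {S N : ℕ → ℕ}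

lemma pairwise_disjoint_rowRanks (hS : ∀ m, S (m + 1) = S m + N m) :
    Pairwise (Disjoint on rowRanks S N) := by
  have hmono : Monotone S := monotone_nat_of_le_succ fun m ↦ (hS m).symm ▸ Nat.le_add_right _ _
  intro k l hkl
  have h := hmono.pairwise_disjoint_on_Ioc_succ hkl
  simpa [Function.onFun, rowRanks, ← Finset.disjoint_coe, ← hS, Set.Icc_add_one_left_eq_Ioc] using h

lemma Icc_subset_rowRanks {u m : ℕ} (hu : u ∈ rowRanks S N m) :
    Finset.Icc (S m + 1) (u - 1) ⊆ rowRanks S N m :=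
  Finset.Icc_subset_Icc_right (u.pred_le.trans (Finset.mem_Icc.1 hu).2)

lemma rowRanks_sdiff_Icc {u m : ℕ} (hu : S m < u) :
    rowRanks S N m \ Finset.Icc (S m + 1) (u - 1) = Finset.Icc u (S m + N m) := by
  ext v
  simp only [rowRanks, Finset.mem_Icc, Finset.mem_sdiff]
  omega

theorem stmt_14_general {Ω : Type*} [MeasurableSpace Ω] {P : Measure Ω} {G D : ℕ → Set Ω}
    (hS : ∀ m, S (m + 1) = S m + N m)
    (hG : ∀ m, MeasurableSet (G m)) (hD : ∀ v, MeasurableSet (D v))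
    (hindep : iIndepSet (Sum.elim G D) P)
    {m₁ m₂ : ℕ} (hm₁ : 1 ≤ m₁) (hm : m₁ < m₂) {u₁ u₂ : ℕ} (hu₁ : u₁ ∈ rowRanks S N m₁)
    (hu₂ : u₂ ∈ rowRanks S N m₂) :
    P.real (rankExamined G D S N u₁ m₁ ∩ rankExamined G D S N u₂ m₂)
      = P.real (rankExamined G D S N u₁ m₁)
        * (∏ v ∈ Finset.Icc u₁ (S m₁ + N m₁), P.real (D v))
        * (∏ m ∈ Finset.Icc (m₁ + 1) (m₂ - 1),
            ((1 - P.real (G m)) * (∏ v ∈ rowRanks S N m, P.real (D v)) + P.real (G m)))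
        * (1 - P.real (G m₂)) * ∏ v ∈ Finset.Icc (S m₂ + 1) (u₂ - 1), P.real (D v) := by
  have hrows : Finset.Icc 1 (m₂ - 1)
      = insert m₁ (Finset.Icc 1 (m₁ - 1) ∪ Finset.Icc (m₁ + 1) (m₂ - 1)) := by
    ext m
    simp only [Finset.mem_Icc, Finset.mem_insert, Finset.mem_union]
    omega
  have hdisj : Disjoint (insert m₁ (Finset.Icc 1 (m₁ - 1)))
      (insert m₂ (Finset.Icc (m₁ + 1) (m₂ - 1))) := by
    simp only [Finset.disjoint_left, Finset.mem_Icc, Finset.mem_insert]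
    omega
  have hm₁_notMem : m₁ ∉ Finset.Icc 1 (m₁ - 1) := by rw [Finset.mem_Icc]; omega
  have hm₂_notMem : m₂ ∉ Finset.Icc (m₁ + 1) (m₂ - 1) := by rw [Finset.mem_Icc]; omega
  rw [rankExamined, rankExamined, hrows, ← rowRanks_sdiff_Icc (Finset.mem_Icc.1 hu₁).1]
  exact measureReal_examined_inter_examined hG hD hindep (pairwise_disjoint_rowRanks hS)
    hm₁_notMem hm₂_notMem hdisj (Icc_subset_rowRanks hu₁) (Icc_subset_rowRanks hu₂)

end Grid

/-- In the row-skipping browsing model, the joint examination probability of two ranks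
`u₁ < u₂` lying in different rows `m₁ < m₂` factors as in equation (15) of the paper. -/
theorem stmt_14 {Ω : Type*} [MeasurableSpace Ω] (P : Measure Ω) [IsProbabilityMeasure P]
    (R : ℕ) (N : ℕ → ℕ) (hN : ∀ m, 1 ≤ m → m ≤ R → 0 < N m)
    (S : ℕ → ℕ) (hS1 : S 1 = 0) (hS : ∀ m, S (m + 1) = S m + N m)
    (γ : ℝ) (C : ℕ → ℝ)
    (G : ℕ → Set Ω) (D : ℕ → Set Ω)
    (hGmeas : ∀ m, MeasurableSet (G m)) (hDmeas : ∀ v, MeasurableSet (D v))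
    (hG : ∀ m, (P (G m)).toReal = γ) (hD : ∀ v, (P (D v)).toReal = C v)
    (hindep : ProbabilityTheory.iIndepSet (Sum.elim G D : ℕ ⊕ ℕ → Set Ω) P)
    (m₁ m₂ : ℕ) (hm₁ : 1 ≤ m₁) (hm₁m₂ : m₁ < m₂) (hm₂R : m₂ ≤ R)
    (u₁ u₂ : ℕ) (hu₁l : S m₁ < u₁) (hu₁r : u₁ ≤ S m₁ + N m₁)
    (hu₂l : S m₂ < u₂) (hu₂r : u₂ ≤ S m₂ + N m₂) (hu₁u₂ : u₁ < u₂)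
    (E : ℕ → ℕ → Set Ω)
    (hE : ∀ u m, E u m = (⋂ m' ∈ Finset.Icc 1 (m - 1),
          (G m' ∪ ⋂ v ∈ Finset.Icc (S m' + 1) (S m' + N m'), D v))
        ∩ (G m)ᶜ
        ∩ ⋂ v ∈ Finset.Icc (S m + 1) (u - 1), D v) :
    (P (E u₁ m₁ ∩ E u₂ m₂)).toReal
      = (P (E u₁ m₁)).toReal
        * (∏ v ∈ Finset.Icc u₁ (S m₁ + N m₁), C v)
        * (∏ m ∈ Finset.Icc (m₁ + 1) (m₂ - 1),
            ((1 - γ) * (∏ v ∈ Finset.Icc (S m + 1) (S m + N m), C v) + γ))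
        * (1 - γ) * ∏ v ∈ Finset.Icc (S m₂ + 1) (u₂ - 1), C v := by
  obtain rfl : E = rankExamined G D S N := funext₂ fun u m ↦ (hE u m).trans (Set.inter_assoc _ _ _)
  simpa only [rowRanks, Measure.real, hG, hD] using
    stmt_14_general hS hGmeas hDmeas hindep hm₁ hm₁m₂
      (Finset.mem_Icc.2 ⟨hu₁l, hu₁r⟩) (Finset.mem_Icc.2 ⟨hu₂l, hu₂r⟩)
end
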